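/- Let d ≥ 6 be an integer, G a graph, u ∈ V(G), and C ⊆ N^{≥d}_G(u). If G[C] is P3-free and the connected components of G[C] are pairwise at distance at least d in the induced subgraph G[N^{≥4}_G(u)], then G[C ∪ {u}] is P3-free and the connected components of G[C ∪ {u}] are pairwise at distance at least d in G. -/

import Mathlib

open SimpleGraph

/-- The connected components of `G[S]` are pairwise at distance at least `d` in `G`. -/
def CompsFar {V : Type*} (G : SimpleGraph V) (d : ℕ) (S : Set V) : Prop :=
  ∀ x y : S, ¬ (G.induce S).Reachable x y → (d : ℕ∞) ≤ G.edist x y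

/-!
If `x` and `y` are at distance at least `d` from `u`, a walk from `x` to `y` that visits a vertex
`w` has length at least `2d - 2 d(u, w)`. A walk of length less than `d` therefore stays in
`N^{≥r}(u)` as soon as `2r ≤ d + 2`, so distances below `d` between such vertices are the same in
`G` and in `G[N^{≥r}(u)]`. Adding `u` to `C` only adds an isolated vertex to `G[C]`, which no
induced copy of a graph without isolated vertices can use.
-/

section

variable {V W : Type*} {G : SimpleGraph V} {H : SimpleGraph W} {u w x y : V} {C S : Set V} {d : ℕ}
  {r : ℕ∞}

theorem isIsolated_induce_insert (hu : ∀ v ∈ C, ¬ G.Adj u v) :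
    (G.induce (insert u C)).IsIsolated ⟨u, Set.mem_insert u C⟩ := by
  rintro ⟨v, rfl | hv⟩
  · exact SimpleGraph.irrefl _
  · exact hu v hv

theorem isEmpty_embedding_induce_insert (hH : ∀ a, ¬ H.IsIsolated a) (hu : ∀ v ∈ C, ¬ G.Adj u v)
    (hC : IsEmpty (H ↪g G.induce C)) : IsEmpty (H ↪g G.induce (insert u C)) := by
  refine ⟨fun f ↦ ?_⟩
  have f_ne (a : W) : (f a : V) ≠ u := fun hfa ↦ by
    have hiso : (G.induce (insert u C)).IsIsolated (f a) :=
      (Subtype.ext hfa : f a = ⟨u, _⟩) ▸ isIsolated_induce_insert hu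
    exact hH a fun b hab ↦ hiso (f b) (f.map_adj_iff.2 hab)
  have f_mem (a : W) : (f a : V) ∈ C := (f a).2.resolve_left (f_ne a)
  exact hC.false
    { toFun := fun a ↦ ⟨f a, f_mem a⟩
      inj' := fun _ _ hab ↦ f.injective (Subtype.ext (Subtype.mk.inj hab))
      map_rel_iff' := f.map_adj_iff }

theorem edist_add_edist_le_length_of_mem_support {p : G.Walk x y} (hw : w ∈ p.support) :
    G.edist w x + G.edist w y ≤ p.length := by
  obtain ⟨q, s, rfl⟩ := Walk.mem_support_iff_exists_append.1 hw
  rw [Walk.length_append, Nat.cast_add, edist_comm (u := w) (v := x)]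
  exact add_le_add (Walk.edist_le q) (Walk.edist_le s)

theorem edist_add_edist_le_two_mul_edist_add_length {p : G.Walk x y} (hw : w ∈ p.support) :
    G.edist u x + G.edist u y ≤ 2 * G.edist u w + p.length :=
  calc G.edist u x + G.edist u y
      ≤ (G.edist u w + G.edist w x) + (G.edist u w + G.edist w y) :=
        add_le_add G.edist_triangle G.edist_triangle
    _ = 2 * G.edist u w + (G.edist w x + G.edist w y) := by ring
    _ ≤ 2 * G.edist u w + p.length := by
        gcongr
        exact edist_add_edist_le_length_of_mem_support hw

theorem le_edist_of_mem_support_of_length_lt (hr : 2 * r ≤ d + 2) (hx : d ≤ G.edist u x)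
    (hy : d ≤ G.edist u y) {p : G.Walk x y} (hp : p.length < d) (hw : w ∈ p.support) :
    r ≤ G.edist u w := by
  have two_mul_le : (d : ℕ∞) + d ≤ 2 * G.edist u w + p.length :=
    (add_le_add hx hy).trans (edist_add_edist_le_two_mul_edist_add_length hw)
  have r_ne_top : r ≠ ⊤ := by
    rintro rfl
    rw [ENat.mul_top two_ne_zero, top_le_iff] at hr
    exact ENat.natCast_ne_top (d + 2) hr
  lift r to ℕ using r_ne_top
  rcases eq_or_ne (G.edist u w) ⊤ with htop | htop
  · simp only [htop, le_top]
  · lift G.edist u w to ℕ using htop with k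
    norm_cast at hr two_mul_le ⊢
    lia

theorem edist_induce_le_length (p : G.Walk x y) (hp : ∀ v ∈ p.support, v ∈ S) :
    (G.induce S).edist ⟨x, hp x p.start_mem_support⟩ ⟨y, hp y p.end_mem_support⟩ ≤ p.length := by
  have length_eq : (p.induce S hp).length = p.length :=
    (Walk.length_map _ _).symm.trans (congrArg Walk.length (Walk.map_induce p hp))
  exact length_eq ▸ Walk.edist_le (p.induce S hp)

theorem le_edist_of_le_edist_induce
    (hS : ∀ p : G.Walk x y, p.length < d → ∀ v ∈ p.support, v ∈ S)
    (hxy : ∀ (hx : x ∈ S) (hy : y ∈ S), d ≤ (G.induce S).edist ⟨x, hx⟩ ⟨y, hy⟩) :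
    d ≤ G.edist x y := by
  by_contra! hlt
  obtain ⟨p, hp⟩ := exists_walk_of_edist_ne_top hlt.ne_top
  rw [← hp] at hlt
  have hpS := hS p (Nat.cast_lt.1 hlt)
  exact ((hxy _ _).trans (edist_induce_le_length p hpS)).not_gt hlt

theorem compsFar_of_le_edist_induce (hr : 2 * r ≤ d + 2) (hC : ∀ v ∈ C, d ≤ G.edist u v)
    (hfar : ∀ x y : C, ¬ (G.induce C).Reachable x y →
      ∀ x' y' : {v | r ≤ G.edist u v}, (x' : V) = x → (y' : V) = y →
        d ≤ (G.induce {v | r ≤ G.edist u v}).edist x' y') :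
    CompsFar G d C := fun x y hxy ↦
  le_edist_of_le_edist_induce
    (fun _ hp _ hw ↦ le_edist_of_mem_support_of_length_lt hr (hC x x.2) (hC y y.2) hp hw)
    fun _ _ ↦ hfar x y hxy _ _ rfl rfl

theorem compsFar_insert (hu : ∀ v ∈ C, d ≤ G.edist u v) (hC : CompsFar G d C) :
    CompsFar G d (insert u C) := by
  rintro ⟨x, rfl | hx⟩ ⟨y, rfl | hy⟩ hxy
  · exact absurd (Reachable.refl _) hxy
  · exact hu y hy
  · exact edist_comm.trans_ge (hu x hx)
  · exact hC ⟨x, hx⟩ ⟨y, hy⟩ fun h ↦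
      hxy (h.map (G.induceHomOfLE (Set.subset_insert u C)).toHom)

theorem stmt13_general (hd : 2 ≤ d) (hr : 2 * r ≤ d + 2) (hC : C ⊆ {v | d ≤ G.edist u v})
    (hH : ∀ a, ¬ H.IsIsolated a) (hfree : IsEmpty (H ↪g G.induce C))
    (hfar : ∀ x y : C, ¬ (G.induce C).Reachable x y →
      ∀ x' y' : {v | r ≤ G.edist u v}, (x' : V) = x → (y' : V) = y →
        d ≤ (G.induce {v | r ≤ G.edist u v}).edist x' y') :
    IsEmpty (H ↪g G.induce (insert u C)) ∧ CompsFar G d (insert u C) := by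
  have not_adj (v : V) (hv : v ∈ C) : ¬ G.Adj u v := fun huv ↦ by
    have one_lt_edist : 1 < G.edist u v := (Nat.one_lt_cast.2 hd).trans_le (hC hv)
    exact one_lt_edist.ne' (edist_eq_one_iff_adj.2 huv)
  exact ⟨isEmpty_embedding_induce_insert hH not_adj hfree,
    compsFar_insert hC (compsFar_of_le_edist_induce hr hC hfar)⟩

end

/-- Let `d ≥ 6`, `u ∈ V(G)` and `C ⊆ N^{≥d}_G(u)`. If `G[C]` is `P₃`-free and its
connected components are pairwise at distance at least `d` in the induced subgraph
`G[N^{≥4}_G(u)]`, then `G[C ∪ {u}]` is `P₃`-free and its connected components are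
pairwise at distance at least `d` in `G`. -/
theorem stmt13 {V : Type*} [Fintype V] (d : ℕ) (hd : 6 ≤ d) (G : SimpleGraph V)
    (u : V) (C : Set V) (hC : C ⊆ {v : V | (d : ℕ∞) ≤ G.edist u v})
    (hP3 : IsEmpty (pathGraph 3 ↪g G.induce C))
    (hfar : ∀ x y : C, ¬ (G.induce C).Reachable x y →
      ∀ x' y' : {v : V | 4 ≤ G.edist u v}, (↑x' : V) = ↑x → (↑y' : V) = ↑y →
        (d : ℕ∞) ≤ (G.induce {v : V | 4 ≤ G.edist u v}).edist x' y') :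
    IsEmpty (pathGraph 3 ↪g G.induce (insert u C)) ∧
      CompsFar G d (insert u C) :=
  stmt13_general (by lia) (by norm_cast; lia) hC (pathGraph_preconnected 3).not_isIsolated hP3 hfar
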